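/- There exists an optimal solution of the vertex-cover LP that is half-integral; that is, there is a feasible assignment x with x_v ∈ {0, 1/2, 1} for every v ∈ V whose value equals the minimum value over all feasible assignments. -/

import Mathlib

open MeasureTheory in
lemma lpvc_round_integral (a : ℝ) (ha : 0 ≤ a) :
    IntegrableOn (fun t : ℝ => (Set.Iic a).indicator (fun _ => (1/2:ℝ)) t
      + (Set.Ioi (1 - a)).indicator (fun _ => (1/2:ℝ)) t) (Set.Ioc 0 (1/2)) ∧
    ∫ t in Set.Ioc (0:ℝ) (1/2), ((Set.Iic a).indicator (fun _ => (1/2:ℝ)) t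
      + (Set.Ioi (1 - a)).indicator (fun _ => (1/2:ℝ)) t) ≤ a / 2 := by
  have hc : IntegrableOn (fun _ : ℝ => (1/2:ℝ)) (Set.Ioc 0 (1/2)) :=
    integrableOn_const (by simp)
  have h1 : IntegrableOn (fun t : ℝ => (Set.Iic a).indicator (fun _ => (1/2:ℝ)) t)
      (Set.Ioc 0 (1/2)) := hc.indicator measurableSet_Iic
  have h2 : IntegrableOn (fun t : ℝ => (Set.Ioi (1 - a)).indicator (fun _ => (1/2:ℝ)) t)
      (Set.Ioc 0 (1/2)) := hc.indicator measurableSet_Ioi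
  refine ⟨h1.add h2, ?_⟩
  rw [integral_add h1 h2, setIntegral_indicator measurableSet_Iic,
    setIntegral_indicator measurableSet_Ioi, Set.Ioc_inter_Iic, Set.Ioc_inter_Ioi,
    setIntegral_const, setIntegral_const, Real.volume_real_Ioc, Real.volume_real_Ioc]
  simp only [smul_eq_mul]
  grind

open MeasureTheory in
lemma lpvc_round {V : Type*} [Fintype V]
    (G : SimpleGraph V) (w : V → ℝ) (hw : ∀ v, 0 < w v) (y : V → ℝ) (hy : ∀ v, 0 ≤ y v)
    (hadj : ∀ u v, G.Adj u v → 1 ≤ y u + y v) :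
    ∃ x : V → ℝ, (∀ u v, G.Adj u v → 1 ≤ x u + x v) ∧
      (∀ v, x v = 0 ∨ x v = 1/2 ∨ x v = 1) ∧ ∑ v, w v * x v ≤ ∑ v, w v * y v := by
  set f : V → ℝ → ℝ := fun v t => (Set.Iic (y v)).indicator (fun _ => (1/2:ℝ)) t
      + (Set.Ioi (1 - y v)).indicator (fun _ => (1/2:ℝ)) t with hf
  have hI : ∀ v ∈ Finset.univ, IntegrableOn (fun t => w v * f v t) (Set.Ioc 0 (1/2)) :=
    fun v _ => (lpvc_round_integral (y v) (hy v)).1.const_mul _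
  obtain ⟨t, ht, hle⟩ := exists_le_setAverage (μ := volume) (s := Set.Ioc (0:ℝ) (1/2))
    (f := fun t => ∑ v, w v * f v t) (by simp) (by simp) (integrable_finset_sum _ hI)
  refine ⟨fun v => f v t, ?_, ?_, hle.trans ?_⟩
  · intro u v h
    have := hadj u v h
    obtain ⟨h0, h1⟩ := ht
    simp only [hf, Set.indicator_apply, Set.mem_Iic, Set.mem_Ioi]
    split_ifs <;> linarith
  · intro v
    simp only [hf, Set.indicator_apply]
    split_ifs <;> norm_num
  · rw [setAverage_eq, integral_finset_sum _ hI, Real.volume_real_Ioc, smul_eq_mul,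
      Finset.mul_sum]
    refine Finset.sum_le_sum fun v _ => ?_
    rw [integral_const_mul]
    have h := mul_le_mul_of_nonneg_left (lpvc_round_integral (y v) (hy v)).2 (hw v).le
    norm_num at h ⊢
    simp only [hf]
    norm_num
    linarith

/-- There exists an optimal solution of the vertex-cover LP that is
half-integral. -/
theorem exists_halfIntegral_optimal_LPVC {V : Type*} [Fintype V]
    (G : SimpleGraph V) (w : V → ℝ) (hw : ∀ v, 0 < w v) :
    ∃ x : V → ℝ,
      (∀ v, 0 ≤ x v) ∧
      (∀ u v, G.Adj u v → 1 ≤ x u + x v) ∧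
      (∀ v, x v = 0 ∨ x v = 1/2 ∨ x v = 1) ∧
      (∀ y : V → ℝ, (∀ v, 0 ≤ y v) → (∀ u v, G.Adj u v → 1 ≤ y u + y v) →
        ∑ v, w v * x v ≤ ∑ v, w v * y v) := by
  have hfin : {x : V → ℝ | (∀ u v, G.Adj u v → 1 ≤ x u + x v) ∧
      (∀ v, x v = 0 ∨ x v = 1/2 ∨ x v = 1)}.Finite := by
    refine (Set.Finite.pi' (t := fun _ : V => ({0, 1/2, 1} : Set ℝ))
      (fun _ => Set.toFinite _)).subset ?_
    rintro x ⟨-, hx⟩ v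
    simpa using hx v
  obtain ⟨x, ⟨hx1, hx2⟩, hmin⟩ := Set.exists_min_image _ (fun x => ∑ v, w v * x v) hfin
    ⟨fun _ => 1, fun _ _ _ => by norm_num, fun _ => by norm_num⟩
  refine ⟨x, fun v => ?_, hx1, hx2, fun y hy hadj => ?_⟩
  · rcases hx2 v with h | h | h <;> rw [h] <;> norm_num
  · obtain ⟨z, h1, h2, h3⟩ := lpvc_round G w hw y hy hadj
    exact (hmin z ⟨h1, h2⟩).trans h3
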